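/- arXiv:1605.07546 — 5 statements merged into one kernel-verified Lean document; each statement's English description precedes it below -/
import Mathlib

section
/- For every n ≥ 1, every nonzero Lie ideal of e(n) contains the translation ideal t(n). -/
/-!
Write `(A, v)` for the block matrix `[[A, v], [0, 0]]`, so that `[(A, w), (0, v)] = (0, A v)`.

A nonzero ideal `I` contains a nonzero translation: a nonzero `(A, w) ∈ I` either has `A = 0`, or
some column `A eⱼ` is nonzero and `[(A, w), (0, eⱼ)] = (0, A eⱼ)` lies in `I` up to sign.

Given `(0, v) ∈ I` with `v ≠ 0` and any vector `u`, the skew-symmetric matrix `u vᵀ - v uᵀ` sends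
`v` to `|v|² u - ⟨u, v⟩ v`; hence `(0, |v|² u) ∈ I`, and dividing by `|v|²` gives `(0, u) ∈ I`.
-/

/-- The Euclidean Lie algebra `e(n)` of the isometry group of `Eⁿ`, realized as the set of
`(n+1)×(n+1)` real matrices with last row zero and skew-symmetric top-left `n×n` block. -/
def euclideanLieSet (n : ℕ) : Set (Matrix (Fin (n + 1)) (Fin (n + 1)) ℝ) :=
  {M | (∀ j, M (Fin.last n) j = 0) ∧
    ∀ i j : Fin n, M (Fin.castSucc i) (Fin.castSucc j) = - M (Fin.castSucc j) (Fin.castSucc i)}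

/-- The translation ideal `t(n) ⊆ e(n)`: matrices with `A = 0`. -/
def translationSet (n : ℕ) : Set (Matrix (Fin (n + 1)) (Fin (n + 1)) ℝ) :=
  {M | (∀ j, M (Fin.last n) j = 0) ∧
    ∀ i j : Fin n, M (Fin.castSucc i) (Fin.castSucc j) = 0}

/-- `I` is a Lie ideal of (the subalgebra with underlying set) `E`: it is an ℝ-subspace of `E`
closed under brackets with arbitrary elements of `E` (bracket = matrix commutator). -/
def IsLieIdealIn {m : Type*} [Fintype m] (E I : Set (Matrix m m ℝ)) : Prop :=
  I ⊆ E ∧ (0 : Matrix m m ℝ) ∈ I ∧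
    (∀ x ∈ I, ∀ y ∈ I, x + y ∈ I) ∧
    (∀ c : ℝ, ∀ x ∈ I, c • x ∈ I) ∧
    (∀ x ∈ E, ∀ y ∈ I, ⁅x, y⁆ ∈ I)

open Matrix

/-- The block matrix `[[A, v], [0, 0]]`. -/
def euclideanBlock {n : ℕ} (A : Matrix (Fin n) (Fin n) ℝ) (v : Fin n → ℝ) :
    Matrix (Fin (n + 1)) (Fin (n + 1)) ℝ :=
  Matrix.of fun i j => Fin.lastCases (motive := fun _ => ℝ) 0
    (fun i' => Fin.lastCases (motive := fun _ => ℝ) (v i') (fun j' => A i' j') j) i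

section euclideanBlock

variable {n : ℕ} (A : Matrix (Fin n) (Fin n) ℝ) (v w : Fin n → ℝ)

@[simp] lemma euclideanBlock_last (j : Fin (n + 1)) :
    euclideanBlock A v (Fin.last n) j = 0 := by
  simp [euclideanBlock]

@[simp] lemma euclideanBlock_castSucc_last (i : Fin n) :
    euclideanBlock A v i.castSucc (Fin.last n) = v i := by
  simp [euclideanBlock]

@[simp] lemma euclideanBlock_castSucc_castSucc (i j : Fin n) :
    euclideanBlock A v i.castSucc j.castSucc = A i j := by
  simp [euclideanBlock]

lemma eq_euclideanBlock {M : Matrix (Fin (n + 1)) (Fin (n + 1)) ℝ}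
    (hM : ∀ j, M (Fin.last n) j = 0) :
    M = euclideanBlock (M.submatrix Fin.castSucc Fin.castSucc)
      (fun i => M i.castSucc (Fin.last n)) := by
  ext i j
  refine Fin.lastCases ?_ (fun i => ?_) i
  · simp [hM]
  · refine Fin.lastCases ?_ (fun j => ?_) j <;> simp

lemma euclideanBlock_mem (hA : ∀ i j, A i j = -A j i) :
    euclideanBlock A v ∈ euclideanLieSet n :=
  ⟨by simp, fun i j => by simpa using hA i j⟩

lemma euclideanBlock_add_translation :
    euclideanBlock 0 v + euclideanBlock 0 w = euclideanBlock 0 (v + w) := by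
  ext i j
  refine Fin.lastCases ?_ (fun i => ?_) i
  · simp
  · refine Fin.lastCases ?_ (fun j => ?_) j <;> simp

lemma smul_euclideanBlock_translation (c : ℝ) :
    c • euclideanBlock 0 v = euclideanBlock 0 (c • v) := by
  ext i j
  refine Fin.lastCases ?_ (fun i => ?_) i
  · simp
  · refine Fin.lastCases ?_ (fun j => ?_) j <;> simp

lemma lie_euclideanBlock_translation :
    ⁅euclideanBlock A w, euclideanBlock 0 v⁆ = euclideanBlock 0 (A *ᵥ v) := by
  rw [Ring.lie_def]
  ext i j
  refine Fin.lastCases ?_ (fun i => ?_) i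
  · simp [Matrix.mul_apply]
  · refine Fin.lastCases ?_ (fun j => ?_) j <;>
      simp [Matrix.mul_apply, Fin.sum_univ_castSucc, Matrix.mulVec, dotProduct]

end euclideanBlock

lemma exists_translation_mem_of_ne_zero {n : ℕ} {I : Set (Matrix (Fin (n + 1)) (Fin (n + 1)) ℝ)}
    (hI : IsLieIdealIn (euclideanLieSet n) I) (hnz : ∃ x ∈ I, x ≠ 0) :
    ∃ v : Fin n → ℝ, v ≠ 0 ∧ euclideanBlock 0 v ∈ I := by
  obtain ⟨hsub, -, -, hsmul, hlie⟩ := hI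
  obtain ⟨x, hxI, hx⟩ := hnz
  obtain ⟨A, w, rfl⟩ : ∃ A w, x = euclideanBlock A w :=
    ⟨_, _, eq_euclideanBlock (hsub hxI).1⟩
  by_cases hA : A = 0
  · subst hA
    refine ⟨w, ?_, hxI⟩
    rintro rfl
    exact hx (by simpa using (smul_euclideanBlock_translation (n := n) 0 0).symm)
  · obtain ⟨i, j, hij⟩ : ∃ i j, A i j ≠ 0 := by
      by_contra! h
      exact hA (Matrix.ext h)
    refine ⟨A *ᵥ Pi.single j 1, fun h => hij (by simpa using congrFun h i), ?_⟩
    have h := hsmul (-1) _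
      (hlie _ (euclideanBlock_mem 0 (Pi.single j 1) (by simp)) _ hxI)
    rwa [neg_one_smul, Ring.lie_def, neg_sub, ← Ring.lie_def, lie_euclideanBlock_translation] at h

/-- Once an ideal contains one nonzero translation, the skew-symmetric matrices `u vᵀ - v uᵀ`
produce all the others. -/
lemma translation_mem_of_translation_mem {n : ℕ}
    {I : Set (Matrix (Fin (n + 1)) (Fin (n + 1)) ℝ)}
    (hI : IsLieIdealIn (euclideanLieSet n) I) {v : Fin n → ℝ} (hv : v ≠ 0)
    (hvI : euclideanBlock 0 v ∈ I) (u : Fin n → ℝ) : euclideanBlock 0 u ∈ I := by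
  obtain ⟨-, -, hadd, hsmul, hlie⟩ := hI
  have hvv : v ⬝ᵥ v ≠ 0 := by simpa using hv
  have hrot := hlie _ (euclideanBlock_mem (vecMulVec u v - vecMulVec v u) 0
    (fun i j => by simp [vecMulVec_apply]; ring)) _ hvI
  rw [lie_euclideanBlock_translation] at hrot
  have h := hsmul (v ⬝ᵥ v)⁻¹ _ (hadd _ hrot _ (hsmul (u ⬝ᵥ v) _ hvI))
  rw [smul_euclideanBlock_translation, euclideanBlock_add_translation,
    smul_euclideanBlock_translation] at h
  convert h using 2
  ext i
  simp [sub_mulVec, vecMulVec_mulVec]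
  field_simp

/-- for every `n ≥ 1`, every nonzero Lie ideal of `e(n)` contains the
translation ideal `t(n)`. -/
theorem nonzero_ideal_contains_translations (n : ℕ) (hn : 1 ≤ n)
    (I : Set (Matrix (Fin (n + 1)) (Fin (n + 1)) ℝ))
    (hI : IsLieIdealIn (euclideanLieSet n) I) (hnz : ∃ x ∈ I, x ≠ 0) :
    translationSet n ⊆ I := by
  obtain ⟨v, hv, hvI⟩ := exists_translation_mem_of_ne_zero hI hnz
  rintro M ⟨hlast, hblock⟩
  have hM := eq_euclideanBlock hlast
  rw [show M.submatrix Fin.castSucc Fin.castSucc = 0 from Matrix.ext hblock] at hM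
  rw [hM]
  exact translation_mem_of_translation_mem hI hv hvI _
end

section
/- For every n ≥ 3 with n ≠ 4, the Lie ideals of e(n) are exactly the three subspaces 0, t(n), and e(n). -/
namespace EuclideanLie

variable {n : ℕ}

/-- Square matrices of size `n + 1`, in which `e(n)` is realized. -/
abbrev Mat (n : ℕ) := Matrix (Fin (n + 1)) (Fin (n + 1)) ℝ

/-- The infinitesimal rotation in the plane of the coordinates `p` and `q`
(zero when `p = q`). -/
def rot (p q : Fin n) : Mat n :=
  Matrix.single p.castSucc q.castSucc 1 - Matrix.single q.castSucc p.castSucc 1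

/-- The infinitesimal translation in the direction of the coordinate `k`. -/
def trans (k : Fin n) : Mat n := Matrix.single k.castSucc (Fin.last n) 1

/-- The matrix obtained from `M` by keeping only the entries with exactly one of their two indices
in `{p, q}`. -/
def mask (p q : Fin n) (M : Mat n) : Mat n := fun i j =>
  if (i = p.castSucc ∨ i = q.castSucc) ↔ ¬ (j = p.castSucc ∨ j = q.castSucc) then M i j else 0

lemma rot_mul_apply {p q : Fin n} (h : p ≠ q) (M : Mat n) (i j : Fin (n + 1)) :
    (rot p q * M) i j = if i = p.castSucc then M q.castSucc j
      else if i = q.castSucc then - M p.castSucc j else 0 := by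
  have h' : p.castSucc ≠ q.castSucc := fun e => h (Fin.castSucc_injective _ e)
  rw [rot, Matrix.sub_mul, Matrix.sub_apply]
  split_ifs with h1 h2
  · subst h1; simp [h']
  · subst h2; simp [h1]
  · simp [h1, h2]

lemma mul_rot_apply {p q : Fin n} (h : p ≠ q) (M : Mat n) (i j : Fin (n + 1)) :
    (M * rot p q) i j = if j = q.castSucc then M i p.castSucc
      else if j = p.castSucc then - M i q.castSucc else 0 := by
  have h' : p.castSucc ≠ q.castSucc := fun e => h (Fin.castSucc_injective _ e)
  rw [rot, Matrix.mul_sub, Matrix.sub_apply]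
  split_ifs with h1 h2
  · subst h1; simp [h'.symm]
  · subst h2; simp [h1]
  · simp [h1, h2]

lemma mem_diag {M : Mat n} (hM : M ∈ euclideanLieSet n) (i : Fin n) :
    M i.castSucc i.castSucc = 0 := by
  have := hM.2 i i
  linarith

lemma lie_rot_lie_rot {p q : Fin n} (h : p ≠ q) {M : Mat n} (hM : M ∈ euclideanLieSet n) :
    ⁅rot p q, ⁅rot p q, M⁆⁆ = - mask p q M := by
  have h' : p.castSucc ≠ q.castSucc := fun e => h (Fin.castSucc_injective _ e)
  have hp := mem_diag hM p
  have hq := mem_diag hM q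
  have hpq := hM.2 p q
  ext i j
  simp only [Ring.lie_def, Matrix.sub_apply, rot_mul_apply h, mul_rot_apply h, Matrix.neg_apply,
    mask]
  by_cases h1 : i = p.castSucc <;> by_cases h2 : i = q.castSucc <;>
    by_cases h3 : j = p.castSucc <;> by_cases h4 : j = q.castSucc <;>
    simp_all [h'.symm]

lemma rot_mem (p q : Fin n) : rot p q ∈ euclideanLieSet n := by
  refine ⟨fun j => ?_, fun i j => ?_⟩
  · simp [rot, Fin.castSucc_ne_last]
  · simp only [rot, Matrix.sub_apply, Matrix.single_apply, Fin.castSucc_inj]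
    simp only [neg_sub, and_comm]

lemma trans_mem (k : Fin n) : trans k ∈ euclideanLieSet n := by
  refine ⟨fun j => ?_, fun i j => ?_⟩ <;>
    simp [trans, Fin.castSucc_ne_last, (Fin.castSucc_ne_last _).symm]

lemma rot_swap (p q : Fin n) : rot q p = (-1 : ℝ) • rot p q := by
  simp [rot]

lemma rot_self (p : Fin n) : rot p p = 0 := by
  simp [rot]

lemma lie_rot_rot {a b c : Fin n} (hab : a ≠ b) (hbc : b ≠ c) (hac : a ≠ c) :
    ⁅rot a b, rot b c⁆ = rot a c := by
  simp only [Ring.lie_def, rot, Matrix.sub_mul, Matrix.mul_sub]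
  simp [Matrix.single_mul_single_of_ne, hab, hbc, hac, hab.symm, hbc.symm, hac.symm]

lemma lie_rot_trans {a b : Fin n} (hab : a ≠ b) : ⁅rot a b, trans b⁆ = trans a := by
  simp only [Ring.lie_def, rot, trans, Matrix.sub_mul, Matrix.mul_sub]
  simp [Matrix.single_mul_single_of_ne, hab, (Fin.castSucc_ne_last _).symm]

lemma lie_rot_trans_of_ne {a b c : Fin n} (hac : a ≠ c) (hbc : b ≠ c) :
    ⁅rot a b, trans c⁆ = 0 := by
  simp only [Ring.lie_def, rot, trans, Matrix.sub_mul, Matrix.mul_sub]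
  simp [Matrix.single_mul_single_of_ne, hac, hbc, (Fin.castSucc_ne_last _).symm]

lemma lie_smul_sub_smul (c d : ℝ) (X Y Z : Mat n) :
    ⁅X, c • Y - d • Z⁆ = c • ⁅X, Y⁆ - d • ⁅X, Z⁆ := by
  simp only [Ring.lie_def, mul_sub, sub_mul, smul_sub, mul_smul_comm, smul_mul_assoc]
  abel

lemma translation_eq_sum {M : Mat n} (hM : M ∈ translationSet n) :
    M = ∑ k : Fin n, M k.castSucc (Fin.last n) • trans k := by
  ext i j
  rw [Matrix.sum_apply]
  simp only [Matrix.smul_apply, trans, Matrix.single_apply]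
  induction i using Fin.lastCases with
  | last => simp [hM.1, Fin.castSucc_ne_last]
  | cast i =>
    induction j using Fin.lastCases with
    | last => simp
    | cast j => simp [hM.2, (Fin.castSucc_ne_last _).symm]

lemma translationSet_subset_euclidean : translationSet n ⊆ euclideanLieSet n :=
  fun _ hM => ⟨hM.1, fun i j => by rw [hM.2, hM.2, neg_zero]⟩

/-- The factor `1 / 2` accounts for each plane being counted twice, as `(i, j)` and `(j, i)`. -/
lemma sub_sum_rot_mem {M : Mat n} (hM : M ∈ euclideanLieSet n) :
    M - ∑ i : Fin n, ∑ j : Fin n, ((1 / 2 : ℝ) * M i.castSucc j.castSucc) • rot i j ∈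
      translationSet n := by
  refine ⟨fun j => ?_, fun a b => ?_⟩
  · simp [Matrix.sum_apply, (rot_mem _ _).1, hM.1]
  · have := hM.2 a b
    simp only [Matrix.sub_apply, Matrix.sum_apply, Matrix.smul_apply, rot, Matrix.single_apply,
      Fin.castSucc_inj, smul_eq_mul, mul_sub, Finset.sum_sub_distrib, ite_and]
    simp
    linarith

/-! ### Ideals -/

section Ideal

variable {I : Set (Mat n)}

/-- A Lie ideal as a linear subspace. -/
def toSubmodule (hI : IsLieIdealIn (euclideanLieSet n) I) : Submodule ℝ (Mat n) where
  carrier := I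
  zero_mem' := hI.2.1
  add_mem' := fun {x y} hx hy => hI.2.2.1 x hx y hy
  smul_mem' := hI.2.2.2.1

lemma translation_subset_of_trans (hI : IsLieIdealIn (euclideanLieSet n) I)
    (h : ∀ k, trans k ∈ I) : translationSet n ⊆ I := by
  intro M hM
  rw [translation_eq_sum hM]
  exact (toSubmodule hI).sum_mem fun k _ => (toSubmodule hI).smul_mem _ (h k)

lemma euclidean_subset_of_rot (hI : IsLieIdealIn (euclideanLieSet n) I)
    (ht : translationSet n ⊆ I) (h : ∀ i j, rot i j ∈ I) : euclideanLieSet n ⊆ I := by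
  intro M hM
  have h1 := ht (sub_sum_rot_mem hM)
  have h2 : ∑ i : Fin n, ∑ j : Fin n, ((1 / 2 : ℝ) * M i.castSucc j.castSucc) • rot i j ∈
      toSubmodule hI :=
    Submodule.sum_mem _ fun i _ => Submodule.sum_mem _ fun j _ => Submodule.smul_mem _ _ (h i j)
  have := (toSubmodule hI).add_mem h1 h2
  rwa [sub_add_cancel] at this

lemma mask_mem (hI : IsLieIdealIn (euclideanLieSet n) I) {p q : Fin n} (h : p ≠ q)
    {M : Mat n} (hM : M ∈ I) : mask p q M ∈ I := by
  have h1 := hI.2.2.2.2 _ (rot_mem p q) _ (hI.2.2.2.2 _ (rot_mem p q) _ hM)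
  rw [lie_rot_lie_rot h (hI.1 hM)] at h1
  have h2 := (toSubmodule hI).neg_mem h1
  rwa [neg_neg] at h2

lemma mem_of_block_eq (hI : IsLieIdealIn (euclideanLieSet n) I) (ht : translationSet n ⊆ I)
    {M N : Mat n} (hM : M ∈ I) (hN : N ∈ euclideanLieSet n)
    (h : ∀ i j : Fin n, M i.castSucc j.castSucc = N i.castSucc j.castSucc) : N ∈ I := by
  have h1 : N - M ∈ translationSet n :=
    ⟨fun j => by simp [hN.1, (hI.1 hM).1], fun i j => by simp [h]⟩
  have := (toSubmodule hI).add_mem (ht h1) hM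
  rwa [sub_add_cancel] at this

lemma exists_notMem (s : Finset (Fin n)) (h : s.card < n) : ∃ x, x ∉ s := by
  by_contra! hs
  have : s = Finset.univ := Finset.eq_univ_iff_forall.2 hs
  simp [this] at h

lemma lie_rot_apply_translation {a b : Fin n} (hab : a ≠ b) {M : Mat n}
    (hM : M ∈ translationSet n) :
    ⁅rot a b, M⁆ = M b.castSucc (Fin.last n) • trans a - M a.castSucc (Fin.last n) • trans b := by
  have h' : a.castSucc ≠ b.castSucc := fun e => hab (Fin.castSucc_injective _ e)
  ext i j
  simp only [Ring.lie_def, Matrix.sub_apply, rot_mul_apply hab, mul_rot_apply hab,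
    Matrix.smul_apply, trans, Matrix.single_apply]
  induction i using Fin.lastCases with
  | last => simp [hM.1, Fin.castSucc_ne_last, (Fin.castSucc_ne_last _).symm]
  | cast i =>
    induction j using Fin.lastCases with
    | last =>
      by_cases h1 : i = a <;> by_cases h2 : i = b <;>
        simp_all [eq_comm, Fin.castSucc_ne_last]
    | cast j => simp [hM.2, (Fin.castSucc_ne_last _).symm]

/-- The translations form an irreducible module under the rotations. -/
lemma translationSet_subset_of_mem (hn : 3 ≤ n) (hI : IsLieIdealIn (euclideanLieSet n) I)
    {M : Mat n} (hM : M ∈ I) (hMt : M ∈ translationSet n) (h0 : M ≠ 0) :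
    translationSet n ⊆ I := by
  obtain ⟨k, hk⟩ : ∃ k : Fin n, M k.castSucc (Fin.last n) ≠ 0 := by
    by_contra! h
    exact h0 (by rw [translation_eq_sum hMt]; simp [h])
  obtain ⟨j, hj⟩ := exists_notMem {k} (by simp; omega)
  obtain ⟨l, hl⟩ := exists_notMem {j, k} (lt_of_le_of_lt Finset.card_le_two hn)
  simp only [Finset.mem_insert, Finset.mem_singleton, not_or] at hj hl
  have h1 := hI.2.2.2.2 _ (rot_mem l j) _ (hI.2.2.2.2 _ (rot_mem j k) _ hM)
  rw [lie_rot_apply_translation hj hMt, lie_smul_sub_smul, lie_rot_trans hl.1,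
    lie_rot_trans_of_ne hl.2 hj, smul_zero, sub_zero] at h1
  have h2 : trans l ∈ I := ((toSubmodule hI).smul_mem_iff hk).1 h1
  refine translation_subset_of_trans hI fun a => ?_
  by_cases ha : a = l
  · rwa [ha]
  · rw [← lie_rot_trans ha]
    exact hI.2.2.2.2 _ (rot_mem _ _) _ h2

lemma lie_trans {M : Mat n} (hM : M ∈ euclideanLieSet n) (k : Fin n) (i : Fin n) :
    ⁅trans k, M⁆ i.castSucc (Fin.last n) = - M i.castSucc k.castSucc := by
  simp only [Ring.lie_def, Matrix.sub_apply, trans]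
  rw [Matrix.mul_single_apply_same]
  by_cases h : i = k
  · subst h; simp [hM.1]
  · simp [h]

lemma lie_trans_mem {M : Mat n} (hM : M ∈ euclideanLieSet n) (k : Fin n) :
    ⁅trans k, M⁆ ∈ translationSet n := by
  have h (i j) : (trans k * M) i j = 0 := by
    by_cases h : i = k.castSucc
    · subst h; simp [trans, hM.1]
    · simp [trans, h]
  refine ⟨fun j => ?_, fun i j => ?_⟩
  · rw [Ring.lie_def, Matrix.sub_apply, h, Matrix.mul_apply]
    simp [hM.1]
  · rw [Ring.lie_def, Matrix.sub_apply, h, trans,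
      Matrix.mul_single_apply_of_ne _ _ _ _ _ (Fin.castSucc_ne_last _), sub_zero]

lemma translationSet_subset (hn : 3 ≤ n) (hI : IsLieIdealIn (euclideanLieSet n) I)
    {M : Mat n} (hM : M ∈ I) (h0 : M ≠ 0) : translationSet n ⊆ I := by
  by_cases hMt : M ∈ translationSet n
  · exact translationSet_subset_of_mem hn hI hM hMt h0
  obtain ⟨i, k, hik⟩ : ∃ i k : Fin n, M i.castSucc k.castSucc ≠ 0 := by
    by_contra! h
    exact hMt ⟨(hI.1 hM).1, h⟩
  refine translationSet_subset_of_mem hn hI (hI.2.2.2.2 _ (trans_mem k) _ hM)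
    (lie_trans_mem (hI.1 hM) k) fun h => hik ?_
  have := lie_trans (hI.1 hM) k i
  rw [h] at this
  simpa using this.symm

/-- One rotation generates all of them. -/
lemma rot_mem_of_rot_mem (hI : IsLieIdealIn (euclideanLieSet n) I) {a b : Fin n} (hab : a ≠ b)
    (h : rot a b ∈ I) (c d : Fin n) : rot c d ∈ I := by
  have swap {x y : Fin n} (hxy : rot x y ∈ I) : rot y x ∈ I := by
    rw [rot_swap]
    exact hI.2.2.2.1 _ _ hxy
  have self (x : Fin n) : rot x x ∈ I := by
    rw [rot_self]
    exact hI.2.1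
  have step {x y z : Fin n} (hyz : y ≠ z) (hxy : x ≠ y) (hxz : x ≠ z) (hm : rot y z ∈ I) :
      rot x z ∈ I := by
    rw [← lie_rot_rot hxy hyz hxz]
    exact hI.2.2.2.2 _ (rot_mem _ _) _ hm
  have hfst (e : Fin n) : rot a e ∈ I := by
    by_cases h1 : e = a
    · rw [h1]; exact self a
    by_cases h2 : e = b
    · rwa [h2]
    exact swap (step hab.symm h2 h1 (swap h))
  by_cases hc : c = a
  · rw [hc]; exact hfst d
  by_cases hd : d = a
  · rw [hd]; exact swap (hfst c)
  by_cases hcd : c = d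
  · rw [hcd]; exact self d
  exact step (Ne.symm hd) hc hcd (hfst d)

lemma rot_mem_of_entry (hn : 3 ≤ n) (hn4 : n ≠ 4) (hI : IsLieIdealIn (euclideanLieSet n) I)
    (ht : translationSet n ⊆ I) {M : Mat n} (hM : M ∈ I) {p s : Fin n} (hps : p ≠ s)
    (h0 : M p.castSucc s.castSucc ≠ 0) : rot p s ∈ I := by
  have hsp := (hI.1 hM).2 p s
  refine ((toSubmodule hI).smul_mem_iff h0).1 ?_
  have hN : M p.castSucc s.castSucc • rot p s ∈ euclideanLieSet n :=
    ⟨fun j => by simp [(rot_mem p s).1], fun i j => by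
      rw [Matrix.smul_apply, Matrix.smul_apply, (rot_mem p s).2, smul_neg]⟩
  obtain ⟨q, hq⟩ := exists_notMem {p, s} (lt_of_le_of_lt Finset.card_le_two hn)
  simp only [Finset.mem_insert, Finset.mem_singleton, not_or] at hq
  obtain rfl | h5 : n = 3 ∨ 5 ≤ n := by omega
  · refine mem_of_block_eq hI ht (mask_mem hI hq.2 (mask_mem hI hq.1 hM)) hN fun i j => ?_
    have hi : i = p ∨ i = q ∨ i = s := by omega
    have hj : j = p ∨ j = q ∨ j = s := by omega
    simp only [mask, rot, Fin.castSucc_inj, Matrix.smul_apply, Matrix.sub_apply,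
      Matrix.single_apply, smul_eq_mul]
    rcases hi with rfl | rfl | rfl <;> rcases hj with rfl | rfl | rfl <;> grind
  · obtain ⟨r, hr⟩ := exists_notMem {p, s, q} (lt_of_le_of_lt Finset.card_le_three (by omega))
    obtain ⟨t, ht'⟩ := exists_notMem {p, s, q, r} (lt_of_le_of_lt Finset.card_le_four h5)
    simp only [Finset.mem_insert, Finset.mem_singleton, not_or] at hr ht'
    refine mem_of_block_eq hI ht (mask_mem hI (Ne.symm ht'.2.1) (mask_mem hI hq.2
      (mask_mem hI (Ne.symm hr.1) (mask_mem hI (Ne.symm hq.1) hM)))) hN fun i j => ?_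
    simp only [mask, rot, Fin.castSucc_inj, Matrix.smul_apply, Matrix.sub_apply,
      Matrix.single_apply, smul_eq_mul]
    grind

end Ideal

/-! ### The three subspaces are ideals -/

lemma lie_apply {X Y : Mat n} (hX : X ∈ euclideanLieSet n) (hY : Y ∈ euclideanLieSet n)
    (i j : Fin n) : ⁅X, Y⁆ i.castSucc j.castSucc =
      ∑ k : Fin n, X i.castSucc k.castSucc * Y k.castSucc j.castSucc -
      ∑ k : Fin n, Y i.castSucc k.castSucc * X k.castSucc j.castSucc := by
  simp [Ring.lie_def, Matrix.mul_apply, Fin.sum_univ_castSucc, hX.1, hY.1]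

lemma lie_last {X Y : Mat n} (hX : X ∈ euclideanLieSet n) (hY : Y ∈ euclideanLieSet n)
    (j : Fin (n + 1)) : ⁅X, Y⁆ (Fin.last n) j = 0 := by
  simp [Ring.lie_def, Matrix.mul_apply, hX.1, hY.1]

lemma isLieIdealIn_zero : IsLieIdealIn (euclideanLieSet n) {0} := by
  refine ⟨?_, rfl, ?_, ?_, ?_⟩
  · rintro _ rfl
    exact ⟨fun j => rfl, fun i j => by simp⟩
  · rintro _ rfl _ rfl; simp
  · rintro c _ rfl; simp
  · rintro x _ _ rfl; simp [Ring.lie_def]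

lemma isLieIdealIn_translation : IsLieIdealIn (euclideanLieSet n) (translationSet n) := by
  refine ⟨translationSet_subset_euclidean, ⟨fun j => rfl, fun i j => rfl⟩, ?_, ?_, ?_⟩
  · intro x hx y hy
    exact ⟨fun j => by simp [hx.1, hy.1], fun i j => by simp [hx.2, hy.2]⟩
  · intro c x hx
    exact ⟨fun j => by simp [hx.1], fun i j => by simp [hx.2]⟩
  · intro x hx y hy
    have hy' := translationSet_subset_euclidean hy
    exact ⟨lie_last hx hy', fun i j => by rw [lie_apply hx hy']; simp [hy.2]⟩

lemma isLieIdealIn_self : IsLieIdealIn (euclideanLieSet n) (euclideanLieSet n) := by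
  refine ⟨subset_rfl, ⟨fun j => rfl, fun i j => by simp⟩, ?_, ?_, ?_⟩
  · intro x hx y hy
    refine ⟨fun j => by simp [hx.1, hy.1], fun i j => ?_⟩
    rw [Matrix.add_apply, Matrix.add_apply, hx.2, hy.2, neg_add]
  · intro c x hx
    refine ⟨fun j => by simp [hx.1], fun i j => ?_⟩
    rw [Matrix.smul_apply, Matrix.smul_apply, hx.2, smul_neg]
  · intro x hx y hy
    refine ⟨lie_last hx hy, fun i j => ?_⟩
    rw [lie_apply hx hy, lie_apply hx hy, neg_sub]
    congr 1 <;> refine Finset.sum_congr rfl fun k _ => ?_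
    · rw [hx.2 i k, hy.2 k j]; ring
    · rw [hy.2 i k, hx.2 k j]; ring

end EuclideanLie

open EuclideanLie in
/-- for every `n ≥ 3` with `n ≠ 4`, the Lie ideals of `e(n)` are exactly
`0`, `t(n)`, and `e(n)`. -/
theorem ideals_of_euclideanLie (n : ℕ) (hn : 3 ≤ n) (hn4 : n ≠ 4)
    (I : Set (Matrix (Fin (n + 1)) (Fin (n + 1)) ℝ)) :
    IsLieIdealIn (euclideanLieSet n) I ↔
      I = {0} ∨ I = translationSet n ∨ I = euclideanLieSet n := by
  constructor
  · intro hI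
    by_cases h0 : ∃ M ∈ I, M ≠ 0
    · obtain ⟨M, hM, hM0⟩ := h0
      have ht := translationSet_subset hn hI hM hM0
      by_cases hsub : I ⊆ translationSet n
      · exact Or.inr (Or.inl (hsub.antisymm ht))
      obtain ⟨N, hN, hNt⟩ := Set.not_subset.1 hsub
      obtain ⟨p, s, hps⟩ : ∃ p s : Fin n, N p.castSucc s.castSucc ≠ 0 := by
        by_contra! h
        exact hNt ⟨(hI.1 hN).1, h⟩
      have hne : p ≠ s := by
        rintro rfl
        exact hps (mem_diag (hI.1 hN) p)
      exact Or.inr (Or.inr (hI.1.antisymm (euclidean_subset_of_rot hI ht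
        (rot_mem_of_rot_mem hI hne (rot_mem_of_entry hn hn4 hI ht hN hne hps)))))
    · push Not at h0
      exact Or.inl (Set.eq_singleton_iff_unique_mem.2 ⟨hI.2.1, h0⟩)
  · rintro (rfl | rfl | rfl)
    · exact isLieIdealIn_zero
    · exact isLieIdealIn_translation
    · exact isLieIdealIn_self
end

section
/- The Lie ideals of c(3) are exactly the five subspaces: 0, the translation ideal t, t + r (the subalgebra of matrices with s = 0, equal to the Euclidean Lie algebra e(3)), t + d (matrices with A = 0), and c(3) itself. -/
/-!
Write an element of `c(3)` as `(a, s, v)` with `a` the axial vector of the skew part, `s` the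
dilation factor and `v` the translation vector (`simMat`). Then
`[(a, s, v), (a', s', v')] = (a × a', 0, a × v' + s v' - a' × v - s' v)` (`lie_simMat`), from which
the five subspaces are seen to be ideals.

Conversely, let `I` be an ideal. The key fact is that `ℝ³` is irreducible under `so(3)`
(`cross_irreducible`). A nonzero element of `I` yields a nonzero translation, after bracketing
with translations if necessary, so `t ⊆ I` (`translations_mem`). If some element of `I` has
`a ≠ 0`, its translation part may be removed, and bracketing with rotations then gives nonzero pure
rotations, so `r ⊆ I` (`rotations_mem`). Hence `I` is determined by whether it is zero, whether it
has an element with `a ≠ 0`, and whether it has one with `s ≠ 0`.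
-/

/-- The Lie algebra `c(3)` of the group of orientation-preserving similarities of `E³`:
`4×4` real matrices of block form `[[A + s·I₃, v], [0, 0]]` with `A` skew-symmetric.
Concretely: last row zero, top-left block skew off the diagonal, constant diagonal. -/
def confLieSet : Set (Matrix (Fin 4) (Fin 4) ℝ) :=
  {M | (∀ j, M (Fin.last 3) j = 0) ∧
    (∀ i j : Fin 3, i ≠ j →
      M (Fin.castSucc i) (Fin.castSucc j) = - M (Fin.castSucc j) (Fin.castSucc i)) ∧
    (∀ i j : Fin 3, M (Fin.castSucc i) (Fin.castSucc i) = M (Fin.castSucc j) (Fin.castSucc j))}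

/-- The translation ideal `t ⊆ c(3)` (top-left block zero). -/
def confT : Set (Matrix (Fin 4) (Fin 4) ℝ) :=
  {M ∈ confLieSet | ∀ i j : Fin 3, M (Fin.castSucc i) (Fin.castSucc j) = 0}

/-- The ideal `t + r ⊆ c(3)` (dilation part `s = 0`); this is the Euclidean algebra `e(3)`. -/
def confTR : Set (Matrix (Fin 4) (Fin 4) ℝ) :=
  {M ∈ confLieSet | ∀ i : Fin 3, M (Fin.castSucc i) (Fin.castSucc i) = 0}

/-- The ideal `t + d ⊆ c(3)` (rotation part `A = 0`). -/
def confTD : Set (Matrix (Fin 4) (Fin 4) ℝ) :=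
  {M ∈ confLieSet | ∀ i j : Fin 3, i ≠ j → M (Fin.castSucc i) (Fin.castSucc j) = 0}

/-- The element of `c(3)` with skew part `w ↦ (a, b, c) × w`, dilation factor `s` and translation
vector `(x, y, z)`. -/
def simMat (a b c s x y z : ℝ) : Matrix (Fin 4) (Fin 4) ℝ :=
  !![s, -c, b, x; c, s, -a, y; -b, a, s, z; 0, 0, 0, 0]

lemma lie_simMat (a b c s x y z a' b' c' s' x' y' z' : ℝ) :
    ⁅simMat a b c s x y z, simMat a' b' c' s' x' y' z'⁆ =
      simMat (b * c' - c * b') (c * a' - a * c') (a * b' - b * a') 0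
        ((b * z' - c * y') + s * x' - (b' * z - c' * y) - s' * x)
        ((c * x' - a * z') + s * y' - (c' * x - a' * z) - s' * y)
        ((a * y' - b * x') + s * z' - (a' * y - b' * x) - s' * z) := by
  rw [Ring.lie_def]
  ext i j
  fin_cases i <;> fin_cases j <;>
    simp [simMat] <;> ring

lemma add_simMat (a b c s x y z a' b' c' s' x' y' z' : ℝ) :
    simMat a b c s x y z + simMat a' b' c' s' x' y' z' =
      simMat (a + a') (b + b') (c + c') (s + s') (x + x') (y + y') (z + z') := by
  ext i j
  fin_cases i <;> fin_cases j <;> simp [simMat] <;> ring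

lemma smul_simMat (k a b c s x y z : ℝ) :
    k • simMat a b c s x y z =
      simMat (k * a) (k * b) (k * c) (k * s) (k * x) (k * y) (k * z) := by
  ext i j
  fin_cases i <;> fin_cases j <;> simp [simMat]

lemma simMat_zero : simMat 0 0 0 0 0 0 0 = 0 := by
  ext i j
  fin_cases i <;> fin_cases j <;> simp [simMat]

lemma simMat_mem (a b c s x y z : ℝ) : simMat a b c s x y z ∈ confLieSet := by
  refine ⟨fun j => ?_, fun i j hij => ?_, fun i j => ?_⟩
  · fin_cases j <;> simp [simMat, Fin.last]
  · fin_cases i <;> fin_cases j <;> simp [simMat] at hij ⊢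
  · fin_cases i <;> fin_cases j <;> simp [simMat]

lemma exists_simMat {M : Matrix (Fin 4) (Fin 4) ℝ} (hM : M ∈ confLieSet) :
    ∃ a b c s x y z, M = simMat a b c s x y z := by
  obtain ⟨h1, h2, h3⟩ := hM
  refine ⟨M 2 1, M 0 2, M 1 0, M 0 0, M 0 3, M 1 3, M 2 3, ?_⟩
  have e1 := h2 0 1 (by decide)
  have e2 := h2 1 2 (by decide)
  have e3 := h2 2 0 (by decide)
  have e4 := h3 1 0
  have e5 := h3 2 0
  have l0 := h1 0
  have l1 := h1 1
  have l2 := h1 2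
  have l3 := h1 3
  simp [Fin.last] at e1 e2 e3 e4 e5 l0 l1 l2 l3
  ext i j
  fin_cases i <;> fin_cases j <;> simp [simMat] <;> assumption

lemma simMat_mem_confT {a b c s x y z : ℝ} :
    simMat a b c s x y z ∈ confT ↔ a = 0 ∧ b = 0 ∧ c = 0 ∧ s = 0 := by
  simp only [confT, Set.mem_sep_iff, simMat_mem, true_and]
  simp [Fin.forall_fin_succ, simMat]
  tauto

lemma simMat_mem_confTR {a b c s x y z : ℝ} :
    simMat a b c s x y z ∈ confTR ↔ s = 0 := by
  simp only [confTR, Set.mem_sep_iff, simMat_mem, true_and]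
  simp [Fin.forall_fin_succ, simMat]

lemma simMat_mem_confTD {a b c s x y z : ℝ} :
    simMat a b c s x y z ∈ confTD ↔ a = 0 ∧ b = 0 ∧ c = 0 := by
  simp only [confTD, Set.mem_sep_iff, simMat_mem, true_and]
  simp [Fin.forall_fin_succ, simMat]
  tauto

/-- Two subsets of `c(3)` agree as soon as they contain the same `simMat`s. -/
lemma eq_of_simMat {I J : Set (Matrix (Fin 4) (Fin 4) ℝ)} (hI : I ⊆ confLieSet)
    (hJ : J ⊆ confLieSet)
    (h : ∀ a b c s x y z, simMat a b c s x y z ∈ I ↔ simMat a b c s x y z ∈ J) : I = J := by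
  ext M
  constructor
  · intro hM
    obtain ⟨a, b, c, s, x, y, z, rfl⟩ := exists_simMat (hI hM)
    exact (h ..).1 hM
  · intro hM
    obtain ⟨a, b, c, s, x, y, z, rfl⟩ := exists_simMat (hJ hM)
    exact (h ..).2 hM

/-- To be an ideal of `c(3)` may be tested on `simMat`s. -/
lemma isLieIdealIn_of_simMat {I : Set (Matrix (Fin 4) (Fin 4) ℝ)} (hI : I ⊆ confLieSet)
    (h0 : simMat 0 0 0 0 0 0 0 ∈ I)
    (hadd : ∀ a b c s x y z a' b' c' s' x' y' z', simMat a b c s x y z ∈ I →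
      simMat a' b' c' s' x' y' z' ∈ I →
      simMat (a + a') (b + b') (c + c') (s + s') (x + x') (y + y') (z + z') ∈ I)
    (hsmul : ∀ k a b c s x y z, simMat a b c s x y z ∈ I →
      simMat (k * a) (k * b) (k * c) (k * s) (k * x) (k * y) (k * z) ∈ I)
    (hlie : ∀ a b c s x y z a' b' c' s' x' y' z', simMat a' b' c' s' x' y' z' ∈ I →
      ⁅simMat a b c s x y z, simMat a' b' c' s' x' y' z'⁆ ∈ I) :
    IsLieIdealIn confLieSet I := by
  refine ⟨hI, simMat_zero ▸ h0, fun X hX Y hY => ?_, fun k X hX => ?_, fun X hX Y hY => ?_⟩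
  · obtain ⟨a, b, c, s, x, y, z, rfl⟩ := exists_simMat (hI hX)
    obtain ⟨a', b', c', s', x', y', z', rfl⟩ := exists_simMat (hI hY)
    rw [add_simMat]
    exact hadd _ _ _ _ _ _ _ _ _ _ _ _ _ _ hX hY
  · obtain ⟨a, b, c, s, x, y, z, rfl⟩ := exists_simMat (hI hX)
    rw [smul_simMat]
    exact hsmul _ _ _ _ _ _ _ _ hX
  · obtain ⟨a, b, c, s, x, y, z, rfl⟩ := exists_simMat hX
    obtain ⟨a', b', c', s', x', y', z', rfl⟩ := exists_simMat (hI hY)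
    exact hlie _ _ _ _ _ _ _ _ _ _ _ _ _ _ hY

/-- Irreducibility of `ℝ³` under `so(3)`: a subspace `P` stable under the maps `e₁ × ·`, `e₂ × ·`,
`e₃ × ·` and containing a nonzero vector is everything. Applying two or three of these maps isolates one
nonzero coordinate as a multiple of `e₁`. -/
lemma cross_irreducible (P : ℝ → ℝ → ℝ → Prop)
    (hadd : ∀ x y z x' y' z', P x y z → P x' y' z' → P (x + x') (y + y') (z + z'))
    (hsmul : ∀ k x y z, P x y z → P (k * x) (k * y) (k * z))
    (h1 : ∀ x y z, P x y z → P 0 (-z) y)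
    (h2 : ∀ x y z, P x y z → P z 0 (-x))
    (h3 : ∀ x y z, P x y z → P (-y) x 0)
    {x y z : ℝ} (h : P x y z) (hne : ¬ (x = 0 ∧ y = 0 ∧ z = 0)) (x' y' z' : ℝ) :
    P x' y' z' := by
  have key : P 1 0 0 := by
    by_cases hx : x = 0
    · by_cases hy : y = 0
      · have hz : z ≠ 0 := fun hz => hne ⟨hx, hy, hz⟩
        -- `e₃ × (e₁ × v) = z e₁`
        have := hsmul z⁻¹ _ _ _ (h3 _ _ _ (h1 _ _ _ h))
        simpa [hz] using this
      · -- `e₂ × (e₁ × v) = y e₁`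
        have := hsmul y⁻¹ _ _ _ (h2 _ _ _ (h1 _ _ _ h))
        simpa [hy] using this
    · -- `e₁ × (e₃ × v) = x e₃` and `e₂ × e₃ = e₁`
      have := hsmul x⁻¹ _ _ _ (h2 _ _ _ (h1 _ _ _ (h3 _ _ _ h)))
      simpa [hx] using this
  have k2 : P 0 1 0 := by simpa using h3 _ _ _ key
  have k3 : P 0 0 1 := by simpa using h1 _ _ _ k2
  have := hadd _ _ _ _ _ _ (hadd _ _ _ _ _ _ (hsmul x' _ _ _ key) (hsmul y' _ _ _ k2))
    (hsmul z' _ _ _ k3)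
  simpa using this

section Ideal

variable {I : Set (Matrix (Fin 4) (Fin 4) ℝ)}

lemma IsLieIdealIn.add_mem (hI : IsLieIdealIn confLieSet I) {a b c s x y z a' b' c' s' x' y' z' : ℝ}
    (h : simMat a b c s x y z ∈ I) (h' : simMat a' b' c' s' x' y' z' ∈ I) :
    simMat (a + a') (b + b') (c + c') (s + s') (x + x') (y + y') (z + z') ∈ I :=
  add_simMat a b c s x y z a' b' c' s' x' y' z' ▸ hI.2.2.1 _ h _ h'

lemma IsLieIdealIn.smul_mem (hI : IsLieIdealIn confLieSet I) (k : ℝ) {a b c s x y z : ℝ}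
    (h : simMat a b c s x y z ∈ I) :
    simMat (k * a) (k * b) (k * c) (k * s) (k * x) (k * y) (k * z) ∈ I :=
  smul_simMat k a b c s x y z ▸ hI.2.2.2.1 k _ h

lemma IsLieIdealIn.lie_mem (hI : IsLieIdealIn confLieSet I) (a b c s x y z : ℝ)
    {a' b' c' s' x' y' z' : ℝ} (h : simMat a' b' c' s' x' y' z' ∈ I) :
    simMat (b * c' - c * b') (c * a' - a * c') (a * b' - b * a') 0
        ((b * z' - c * y') + s * x' - (b' * z - c' * y) - s' * x)
        ((c * x' - a * z') + s * y' - (c' * x - a' * z) - s' * y)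
        ((a * y' - b * x') + s * z' - (a' * y - b' * x) - s' * z) ∈ I :=
  lie_simMat a b c s x y z a' b' c' s' x' y' z' ▸ hI.2.2.2.2 _ (simMat_mem ..) _ h

lemma translations_of_translation (hI : IsLieIdealIn confLieSet I) {x y z : ℝ}
    (h : simMat 0 0 0 0 x y z ∈ I) (hne : ¬ (x = 0 ∧ y = 0 ∧ z = 0)) (x' y' z' : ℝ) :
    simMat 0 0 0 0 x' y' z' ∈ I := by
  refine cross_irreducible (fun x y z => simMat 0 0 0 0 x y z ∈ I) ?_ ?_ ?_ ?_ ?_ h hne x' y' z'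
  · intro x y z x' y' z' h h'
    simpa using hI.add_mem h h'
  · intro k x y z h
    simpa using hI.smul_mem k h
  · intro x y z h
    simpa using hI.lie_mem 1 0 0 0 0 0 0 h
  · intro x y z h
    simpa using hI.lie_mem 0 1 0 0 0 0 0 h
  · intro x y z h
    simpa using hI.lie_mem 0 0 1 0 0 0 0 h

/-- A nonzero ideal contains `t`. -/
lemma translations_mem (hI : IsLieIdealIn confLieSet I) {a b c s x y z : ℝ}
    (h : simMat a b c s x y z ∈ I)
    (hne : ¬ (a = 0 ∧ b = 0 ∧ c = 0 ∧ s = 0 ∧ x = 0 ∧ y = 0 ∧ z = 0)) (x' y' z' : ℝ) :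
    simMat 0 0 0 0 x' y' z' ∈ I := by
  -- The brackets with `e₁`, `e₂` involve all of `a, b, c, s`, so one of them is nonzero unless
  -- the element is itself a translation.
  have t1 := hI.lie_mem 0 0 0 0 1 0 0 h
  have t2 := hI.lie_mem 0 0 0 0 0 1 0 h
  simp only [zero_mul, mul_zero, mul_one, sub_zero, zero_sub, add_zero, sub_self, neg_neg] at t1 t2
  by_cases n1 : -s = 0 ∧ -c = 0 ∧ b = 0
  · by_cases n2 : c = 0 ∧ -s = 0 ∧ -a = 0
    · obtain ⟨hs, hc, rfl⟩ := n1
      obtain ⟨rfl, -, ha⟩ := n2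
      obtain rfl := neg_eq_zero.1 hs
      obtain rfl := neg_eq_zero.1 ha
      exact translations_of_translation hI h (by simpa using hne) x' y' z'
    · exact translations_of_translation hI t2 n2 x' y' z'
  · exact translations_of_translation hI t1 n1 x' y' z'

/-- An ideal having an element with nonzero rotation part contains `r`. -/
lemma rotations_mem (hI : IsLieIdealIn confLieSet I) {a b c s x y z : ℝ}
    (h : simMat a b c s x y z ∈ I) (hne : ¬ (a = 0 ∧ b = 0 ∧ c = 0)) (a' b' c' : ℝ) :
    simMat a' b' c' 0 0 0 0 ∈ I := by
  have ht := translations_mem hI h (by tauto)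
  have h0 : simMat a b c s 0 0 0 ∈ I := by
    simpa using hI.add_mem h (ht (-x) (-y) (-z))
  have irr : ∀ {a b c : ℝ}, simMat a b c 0 0 0 0 ∈ I → ¬ (a = 0 ∧ b = 0 ∧ c = 0) →
      simMat a' b' c' 0 0 0 0 ∈ I := by
    intro a b c h hne
    refine cross_irreducible (fun a b c => simMat a b c 0 0 0 0 ∈ I) ?_ ?_ ?_ ?_ ?_ h hne a' b' c'
    · intro x y z x' y' z' h h'
      simpa using hI.add_mem h h'
    · intro k x y z h
      simpa using hI.smul_mem k h
    · intro x y z h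
      simpa using hI.lie_mem 1 0 0 0 0 0 0 h
    · intro x y z h
      simpa using hI.lie_mem 0 1 0 0 0 0 0 h
    · intro x y z h
      simpa using hI.lie_mem 0 0 1 0 0 0 0 h
  -- Bracketing with a rotation kills `s`; rotations about `e₁` and `e₂` detect all of `a, b, c`.
  have r1 : simMat 0 (-c) b 0 0 0 0 ∈ I := by simpa using hI.lie_mem 1 0 0 0 0 0 0 h0
  have r2 : simMat c 0 (-a) 0 0 0 0 ∈ I := by simpa using hI.lie_mem 0 1 0 0 0 0 0 h0
  by_cases n1 : (0 : ℝ) = 0 ∧ -c = 0 ∧ b = 0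
  · refine irr r2 ?_
    rintro ⟨hc, -, ha⟩
    exact hne ⟨neg_eq_zero.1 ha, n1.2.2, hc⟩
  · exact irr r1 n1

end Ideal

/-- the Lie ideals of `c(3)` are exactly `0`, `t`, `t + r = e(3)`,
`t + d`, and `c(3)` itself. -/
theorem ideals_of_confLie (I : Set (Matrix (Fin 4) (Fin 4) ℝ)) :
    IsLieIdealIn confLieSet I ↔
      I = {0} ∨ I = confT ∨ I = confTR ∨ I = confTD ∨ I = confLieSet := by
  have sT : confT ⊆ confLieSet := fun _ h => h.1
  have sTR : confTR ⊆ confLieSet := fun _ h => h.1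
  have sTD : confTD ⊆ confLieSet := fun _ h => h.1
  constructor
  · intro hI
    by_cases hz : ∀ M ∈ I, M = 0
    · left
      exact Set.eq_singleton_iff_unique_mem.2 ⟨hI.2.1, hz⟩
    right
    push Not at hz
    obtain ⟨M, hM, hM0⟩ := hz
    obtain ⟨a, b, c, s, x, y, z, rfl⟩ := exists_simMat (hI.1 hM)
    have ht := translations_mem hI hM (by
      rintro ⟨rfl, rfl, rfl, rfl, rfl, rfl, rfl⟩
      exact hM0 simMat_zero)
    by_cases hr : ∀ a b c s x y z, simMat a b c s x y z ∈ I → a = 0 ∧ b = 0 ∧ c = 0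
    · by_cases hd : ∀ a b c s x y z, simMat a b c s x y z ∈ I → s = 0
      · left
        refine eq_of_simMat hI.1 sT fun a b c s x y z => ?_
        rw [simMat_mem_confT]
        refine ⟨fun h => ?_, ?_⟩
        · obtain ⟨ha, hb, hc⟩ := hr _ _ _ _ _ _ _ h
          exact ⟨ha, hb, hc, hd _ _ _ _ _ _ _ h⟩
        · rintro ⟨rfl, rfl, rfl, rfl⟩
          exact ht x y z
      · right; right; left
        push Not at hd
        obtain ⟨a₀, b₀, c₀, s₀, x₀, y₀, z₀, h₀, hs⟩ := hd
        obtain ⟨rfl, rfl, rfl⟩ := hr _ _ _ _ _ _ _ h₀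
        refine eq_of_simMat hI.1 sTD fun a b c s x y z => ?_
        rw [simMat_mem_confTD]
        refine ⟨hr _ _ _ _ _ _ _, ?_⟩
        rintro ⟨rfl, rfl, rfl⟩
        have := hI.add_mem (hI.smul_mem (s / s₀) h₀)
          (ht (x - s / s₀ * x₀) (y - s / s₀ * y₀) (z - s / s₀ * z₀))
        simpa [hs] using this
    · push Not at hr
      obtain ⟨a₁, b₁, c₁, s₁, x₁, y₁, z₁, h₁, hne⟩ := hr
      have hrot := rotations_mem hI h₁ (by tauto)
      by_cases hd : ∀ a b c s x y z, simMat a b c s x y z ∈ I → s = 0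
      · right; left
        refine eq_of_simMat hI.1 sTR fun a b c s x y z => ?_
        rw [simMat_mem_confTR]
        refine ⟨hd _ _ _ _ _ _ _, ?_⟩
        rintro rfl
        simpa using hI.add_mem (hrot a b c) (ht x y z)
      · right; right; right
        push Not at hd
        obtain ⟨a₀, b₀, c₀, s₀, x₀, y₀, z₀, h₀, hs⟩ := hd
        refine eq_of_simMat hI.1 subset_rfl fun a b c s x y z => ?_
        refine ⟨fun _ => simMat_mem .., fun _ => ?_⟩
        have := hI.add_mem (hI.add_mem (hI.smul_mem (s / s₀) h₀)
          (ht (x - s / s₀ * x₀) (y - s / s₀ * y₀) (z - s / s₀ * z₀)))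
          (hrot (a - s / s₀ * a₀) (b - s / s₀ * b₀) (c - s / s₀ * c₀))
        simpa [hs] using this
  · rintro (rfl | rfl | rfl | rfl | rfl)
    · refine ⟨?_, rfl, ?_, ?_, ?_⟩
      · rintro _ rfl
        exact simMat_zero ▸ simMat_mem ..
      · rintro _ rfl _ rfl
        simp
      · rintro k _ rfl
        simp
      · rintro X - _ rfl
        simp [Ring.lie_def]
    · refine isLieIdealIn_of_simMat sT ?_ ?_ ?_ ?_ <;>
        simp +contextual [lie_simMat, simMat_mem_confT]
    · refine isLieIdealIn_of_simMat sTR ?_ ?_ ?_ ?_ <;>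
        simp +contextual [lie_simMat, simMat_mem_confTR]
    · refine isLieIdealIn_of_simMat sTD ?_ ?_ ?_ ?_ <;>
        simp +contextual [lie_simMat, simMat_mem_confTD]
    · refine isLieIdealIn_of_simMat subset_rfl ?_ ?_ ?_ ?_ <;>
        simp [lie_simMat, simMat_mem]
end

section
/- Make ℝ into a module over the Lie algebra c(3) by letting m ∈ c(3) act on r ∈ ℝ as m · r = −tr(m) · r (where tr is the matrix trace, so an element with dilation parameter s acts as multiplication by −3s). Then every 2-cocycle of c(3) with coefficients in this module is a coboundary: if c : c(3) × c(3) → ℝ is alternating bilinear and satisfies (x·c(y,z)) − (y·c(x,z)) + (z·c(x,y)) − c([x,y],z) + c([x,z],y) − c([y,z],x) = 0 for all x, y, z ∈ c(3), then there exists a linear map β : c(3) → ℝ with c(x,y) = (x·β(y)) − (y·β(x)) − β([x,y]) for all x, y ∈ c(3). -/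
/-- The action of `m ∈ c(3)` on the module `ℝ`: `m · r = −tr(m)·r` (an element with
dilation parameter `s` has trace `3s`, hence acts as multiplication by `−3s`). -/
noncomputable def confAct (m : Matrix (Fin 4) (Fin 4) ℝ) (r : ℝ) : ℝ :=
  -(Matrix.trace m) * r

/-- The projector `E` onto the last coordinate: `x * E` is the translation part of `x ∈ c(3)`. -/
def transE : Matrix (Fin 4) (Fin 4) ℝ := Matrix.single 3 3 1

/-- The dilation generator `D = diag(1,1,1,0)` of `c(3)`. -/
def dilD : Matrix (Fin 4) (Fin 4) ℝ := 1 - transE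

lemma transE_mul_self : transE * transE = transE := by
  simp [transE]

lemma transE_mul {x : Matrix (Fin 4) (Fin 4) ℝ} (hx : x ∈ confLieSet) : transE * x = 0 := by
  ext i j
  have h : x 3 j = 0 := hx.1 j
  fin_cases i <;> simp [transE, Matrix.mul_apply, Matrix.single_apply, h]

lemma add_mem_conf {x y : Matrix (Fin 4) (Fin 4) ℝ} (hx : x ∈ confLieSet)
    (hy : y ∈ confLieSet) : x + y ∈ confLieSet := by
  refine ⟨fun j => ?_, fun i j hij => ?_, fun i j => ?_⟩
  · rw [Matrix.add_apply, hx.1 j, hy.1 j, add_zero]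
  · simp only [Matrix.add_apply, hx.2.1 i j hij, hy.2.1 i j hij]; ring
  · simp only [Matrix.add_apply, hx.2.2 i j, hy.2.2 i j]

lemma sub_mem_conf {x y : Matrix (Fin 4) (Fin 4) ℝ} (hx : x ∈ confLieSet)
    (hy : y ∈ confLieSet) : x - y ∈ confLieSet := by
  refine ⟨fun j => ?_, fun i j hij => ?_, fun i j => ?_⟩
  · rw [Matrix.sub_apply, hx.1 j, hy.1 j, sub_zero]
  · simp only [Matrix.sub_apply, hx.2.1 i j hij, hy.2.1 i j hij]; ring
  · simp only [Matrix.sub_apply, hx.2.2 i j, hy.2.2 i j]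

lemma mul_transE_apply_castSucc (x : Matrix (Fin 4) (Fin 4) ℝ) (i : Fin 4) (j : Fin 3) :
    (x * transE) i (Fin.castSucc j) = 0 := by
  fin_cases j <;> simp [transE, Matrix.mul_apply]

lemma mul_transE_mem {x : Matrix (Fin 4) (Fin 4) ℝ} (hx : x ∈ confLieSet) :
    x * transE ∈ confLieSet := by
  refine ⟨fun j => ?_, fun i j _ => ?_, fun i j => ?_⟩
  · rw [Matrix.mul_apply]
    exact Finset.sum_eq_zero fun k _ => by rw [hx.1 k, zero_mul]
  · simp [mul_transE_apply_castSucc]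
  · simp [mul_transE_apply_castSucc]

lemma dilD_mem : dilD ∈ confLieSet := by
  refine ⟨fun j => ?_, fun i j hij => ?_, fun i j => ?_⟩
  · fin_cases j <;> simp [dilD, transE, Fin.last]
  · fin_cases i <;> fin_cases j <;>
      simp_all [dilD, transE]
  · fin_cases i <;> fin_cases j <;>
      simp [dilD, transE]

lemma trace_dilD : Matrix.trace dilD = 3 := by
  simp [dilD, transE, Matrix.trace_sub]; norm_num

lemma trace_mul_transE {x : Matrix (Fin 4) (Fin 4) ℝ} (hx : x ∈ confLieSet) :
    Matrix.trace (x * transE) = 0 := by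
  rw [Matrix.trace_mul_comm, transE_mul hx, Matrix.trace_zero]

lemma lie_dilD {x : Matrix (Fin 4) (Fin 4) ℝ} (hx : x ∈ confLieSet) :
    ⁅dilD, x⁆ = x * transE := by
  rw [Ring.lie_def, dilD, sub_mul, mul_sub, transE_mul hx]; simp

lemma lie_mem_conf {x y : Matrix (Fin 4) (Fin 4) ℝ} (hx : x ∈ confLieSet)
    (hy : y ∈ confLieSet) : ⁅x, y⁆ ∈ confLieSet := by
  obtain ⟨hx0, hx1, hx2⟩ := hx
  obtain ⟨hy0, hy1, hy2⟩ := hy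
  -- with zero last rows, the top-left block of the product is the product of the blocks
  have key : ∀ i j : Fin 3, ⁅x, y⁆ i.castSucc j.castSucc =
      ∑ k : Fin 3, (x i.castSucc k.castSucc * y k.castSucc j.castSucc
        - y i.castSucc k.castSucc * x k.castSucc j.castSucc) := by
    intro i j
    rw [Ring.lie_def, Matrix.sub_apply, Matrix.mul_apply, Matrix.mul_apply,
      Fin.sum_univ_castSucc (n := 3), Fin.sum_univ_castSucc (n := 3), hx0, hy0,
      Finset.sum_sub_distrib]
    ring
  have a01 := hx1 1 0 (by decide)
  have a02 := hx1 2 0 (by decide)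
  have a12 := hx1 2 1 (by decide)
  have b01 := hy1 1 0 (by decide)
  have b02 := hy1 2 0 (by decide)
  have b12 := hy1 2 1 (by decide)
  have a1 := hx2 1 0
  have a2 := hx2 2 0
  have b1 := hy2 1 0
  have b2 := hy2 2 0
  refine ⟨fun j => ?_, fun i j hij => ?_, fun i j => ?_⟩
  · rw [Ring.lie_def, Matrix.sub_apply, Matrix.mul_apply, Matrix.mul_apply]
    simp only [hx0, hy0, zero_mul, Finset.sum_const_zero, sub_zero]
  · rw [key, key, Fin.sum_univ_three, Fin.sum_univ_three]
    fin_cases i <;> fin_cases j <;> first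
      | exact absurd rfl hij
      | (dsimp only [Fin.zero_eta, Fin.mk_one, Fin.reduceFinMk]
         simp only [a01, a02, a12, b01, b02, b12, a1, a2, b1, b2]; ring)
  · rw [key, key, Fin.sum_univ_three, Fin.sum_univ_three]
    fin_cases i <;> fin_cases j <;> first
      | rfl
      | (dsimp only [Fin.zero_eta, Fin.mk_one, Fin.reduceFinMk]
         simp only [a01, a02, a12, b01, b02, b12, a1, a2, b1, b2]; ring)

/-- Cartan's formula for the dilation: on `ad D`-weight vectors of weights `i` and `j`, a cocycle
is, up to the factor `-(3 + i + j)`, the coboundary of `c(D, ·)`. -/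
lemma cartan_of_weight
    (c : Matrix (Fin 4) (Fin 4) ℝ →ₗ[ℝ] Matrix (Fin 4) (Fin 4) ℝ →ₗ[ℝ] ℝ)
    (halt : ∀ x ∈ confLieSet, c x x = 0)
    (hcoc : ∀ x ∈ confLieSet, ∀ y ∈ confLieSet, ∀ z ∈ confLieSet,
      confAct x (c y z) - confAct y (c x z) + confAct z (c x y)
        - c ⁅x, y⁆ z + c ⁅x, z⁆ y - c ⁅y, z⁆ x = 0)
    {x y : Matrix (Fin 4) (Fin 4) ℝ} (hx : x ∈ confLieSet) (hy : y ∈ confLieSet) (i j : ℝ)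
    (hi : x * transE = i • x) (hj : y * transE = j • y) :
    -(3 + i + j) * c x y =
      confAct x (c dilD y) - confAct y (c dilD x) - c dilD ⁅x, y⁆ := by
  have anti : ∀ a ∈ confLieSet, ∀ b ∈ confLieSet, c a b = - c b a := by
    intro a ha b hb
    have h := halt _ (add_mem_conf ha hb)
    simp only [map_add, LinearMap.add_apply, halt a ha, halt b hb] at h
    linarith
  have h := hcoc dilD dilD_mem x hx y hy
  rw [lie_dilD hx, lie_dilD hy, hi, hj, anti _ (lie_mem_conf hx hy) _ dilD_mem] at h
  simp only [map_smul, LinearMap.smul_apply, smul_eq_mul, anti y hy x hx] at h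
  simp only [confAct, trace_dilD] at h ⊢
  linarith

/-- every 2-cocycle of `c(3)` with coefficients in the module `ℝ`
(action `m · r = −tr(m)·r`) is a coboundary. -/
theorem h2_conf3_with_coefficients
    (c : Matrix (Fin 4) (Fin 4) ℝ →ₗ[ℝ] Matrix (Fin 4) (Fin 4) ℝ →ₗ[ℝ] ℝ)
    (halt : ∀ x ∈ confLieSet, c x x = 0)
    (hcoc : ∀ x ∈ confLieSet, ∀ y ∈ confLieSet, ∀ z ∈ confLieSet,
      confAct x (c y z) - confAct y (c x z) + confAct z (c x y)
        - c ⁅x, y⁆ z + c ⁅x, z⁆ y - c ⁅y, z⁆ x = 0) :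
    ∃ β : Matrix (Fin 4) (Fin 4) ℝ →ₗ[ℝ] ℝ,
      ∀ x ∈ confLieSet, ∀ y ∈ confLieSet,
        c x y = confAct x (β y) - confAct y (β x) - β ⁅x, y⁆ := by
  -- `-1/3` on weight `0`, and `-1/3 + 1/12 = -1/4` on weight `1`
  refine ⟨(-1 / 3 : ℝ) • c dilD + (1 / 12 : ℝ) • (c dilD ∘ₗ LinearMap.mulRight ℝ transE), ?_⟩
  intro x hx y hy
  have hu := mul_transE_mem hx
  have hv := mul_transE_mem hy
  have tu := trace_mul_transE hx
  have tv := trace_mul_transE hy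
  have huE : x * transE * transE = x * transE := by rw [mul_assoc, transE_mul_self]
  have hvE : y * transE * transE = y * transE := by rw [mul_assoc, transE_mul_self]
  -- split `x = a + u` and `y = b + v` into parts of weight `0` and `1`
  obtain ⟨u, hu_def⟩ : ∃ u, u = x * transE := ⟨_, rfl⟩
  obtain ⟨v, hv_def⟩ : ∃ v, v = y * transE := ⟨_, rfl⟩
  obtain ⟨a, ha_def⟩ : ∃ a, a = x - u := ⟨_, rfl⟩
  obtain ⟨b, hb_def⟩ : ∃ b, b = y - v := ⟨_, rfl⟩
  rw [← hu_def] at hu tu huE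
  rw [← hv_def] at hv tv hvE
  have ha : a ∈ confLieSet := ha_def ▸ sub_mem_conf hx hu
  have hb : b ∈ confLieSet := hb_def ▸ sub_mem_conf hy hv
  have haE : a * transE = 0 := by rw [ha_def, sub_mul, huE, ← hu_def, sub_self]
  have hbE : b * transE = 0 := by rw [hb_def, sub_mul, hvE, ← hv_def, sub_self]
  have hxa : x = a + u := by rw [ha_def]; abel
  have hyb : y = b + v := by rw [hb_def]; abel
  clear hu_def hv_def ha_def hb_def
  subst hxa hyb
  have Eu := transE_mul hu
  have Ev := transE_mul hv
  have huv0 : u * v = 0 := by rw [← huE, mul_assoc, Ev, mul_zero]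
  have hvu0 : v * u = 0 := by rw [← hvE, mul_assoc, Eu, mul_zero]
  have hua0 : u * b = 0 := by rw [← huE, mul_assoc, transE_mul hb, mul_zero]
  have hva0 : v * a = 0 := by rw [← hvE, mul_assoc, transE_mul ha, mul_zero]
  have luv : ⁅u, v⁆ = 0 := by rw [Ring.lie_def, huv0, hvu0, sub_zero]
  have lab : ⁅a, b⁆ * transE = 0 := by
    rw [Ring.lie_def, sub_mul, mul_assoc, mul_assoc, haE, hbE]; simp
  have lav : ⁅a, v⁆ * transE = ⁅a, v⁆ := by
    rw [Ring.lie_def, hva0, sub_zero, mul_assoc, hvE]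
  have lub : ⁅u, b⁆ * transE = ⁅u, b⁆ := by
    rw [Ring.lie_def, hua0, zero_sub, neg_mul, mul_assoc, huE]
  have lsplit : ⁅a + u, b + v⁆ = ⁅a, b⁆ + ⁅a, v⁆ + ⁅u, b⁆ := by
    have h : ⁅a + u, b + v⁆ = ⁅a, b⁆ + ⁅a, v⁆ + ⁅u, b⁆ + ⁅u, v⁆ := by
      simp only [Ring.lie_def]; noncomm_ring
    rw [h, luv, add_zero]
  have cab := cartan_of_weight c halt hcoc ha hb 0 0 (by simp [haE]) (by simp [hbE])
  have cav := cartan_of_weight c halt hcoc ha hv 0 1 (by simp [haE]) (by simp [hvE])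
  have cub := cartan_of_weight c halt hcoc hu hb 1 0 (by simp [huE]) (by simp [hbE])
  have cuv := cartan_of_weight c halt hcoc hu hv 1 1 (by simp [huE]) (by simp [hvE])
  simp only [confAct, tu, tv, luv, map_zero] at cab cav cub cuv
  simp only [confAct, LinearMap.add_apply, LinearMap.smul_apply, LinearMap.comp_apply,
    LinearMap.mulRight_apply, smul_eq_mul, map_add, Matrix.trace_add, tu, tv, lsplit,
    haE, hbE, huE, hvE, lab, lav, lub, map_zero]
  linarith
end

section
/- Let a and b be real numbers. Let S be the additive subgroup of ℝ³ generated by the plane V = { (x, y, a·x + b·y) : x, y ∈ ℝ } together with the subgroup ℤ² × {0} = { (m, n, 0) : m, n ∈ ℤ }. Then S is a closed subset of ℝ³ if and only if a and b are linearly dependent over ℚ, i.e. there exist rational numbers q₁, q₂, not both zero, with q₁·a + q₂·b = 0. -/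
/-!
The subgroup `S` is the preimage of `H = ℤa + ℤb ⊆ ℝ` under the linear functional
`(x, y, z) ↦ z - a x - b y`, whose kernel is the plane. This functional has the continuous section
`z ↦ (0, 0, z)`, so `S` is closed if and only if `H` is. A subgroup of `ℝ` is dense or
cyclic; `H` is dense exactly when `a / b` is irrational, and a cyclic subgroup is closed, whereas a
closed dense subgroup would be all of `ℝ`, which is impossible since `H` is countable. Hence `H` is
closed exactly when `a / b` is rational, where `a / 0 = 0` agrees with the dependence of `a`
and `0`.
-/

lemma mem_plane_plus_lattice_iff (a b : ℝ) (p : ℝ × ℝ × ℝ) :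
    p ∈ AddSubgroup.closure
        ({p : ℝ × ℝ × ℝ | ∃ x y : ℝ, p = (x, y, a * x + b * y)} ∪
          {p : ℝ × ℝ × ℝ | ∃ m n : ℤ, p = ((m : ℝ), (n : ℝ), 0)}) ↔
      p.2.2 - a * p.1 - b * p.2.1 ∈ AddSubgroup.closure {a, b} := by
  rw [AddSubgroup.mem_closure_pair]
  constructor
  · intro h
    induction h using AddSubgroup.closure_induction with
    | mem p hp =>
      rcases hp with ⟨x, y, rfl⟩ | ⟨m, n, rfl⟩
      · exact ⟨0, 0, by simp⟩
      · exact ⟨-m, -n, by simp; ring⟩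
    | zero => exact ⟨0, 0, by simp⟩
    | add p q _ _ hp hq =>
      obtain ⟨m, n, h⟩ := hp
      obtain ⟨m', n', h'⟩ := hq
      refine ⟨m + m', n + n', ?_⟩
      simp only [zsmul_eq_mul, Prod.fst_add, Prod.snd_add] at *
      push_cast
      linear_combination h + h'
    | neg p _ hp =>
      obtain ⟨m, n, h⟩ := hp
      refine ⟨-m, -n, ?_⟩
      simp only [zsmul_eq_mul, Prod.fst_neg, Prod.snd_neg] at *
      push_cast
      linear_combination -h
  · obtain ⟨x, y, z⟩ := p
    rintro ⟨m, n, h⟩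
    simp only [zsmul_eq_mul] at h
    -- The plane point over `(x + m, y + n)` has height `z`.
    have key : ((x, y, z) : ℝ × ℝ × ℝ) =
        (x + m, y + n, a * (x + m) + b * (y + n)) + (((-m : ℤ) : ℝ), ((-n : ℤ) : ℝ), 0) := by
      ext
      · simp
      · simp
      · simp only [Prod.snd_add]
        linear_combination -h
    rw [key]
    exact add_mem (AddSubgroup.subset_closure (Or.inl ⟨_, _, rfl⟩))
      (AddSubgroup.subset_closure (Or.inr ⟨_, _, rfl⟩))

lemma isClosed_plane_plus_lattice_iff (a b : ℝ) :
    IsClosed ((AddSubgroup.closure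
        ({p : ℝ × ℝ × ℝ | ∃ x y : ℝ, p = (x, y, a * x + b * y)} ∪
          {p : ℝ × ℝ × ℝ | ∃ m n : ℤ, p = ((m : ℝ), (n : ℝ), 0)})) : Set (ℝ × ℝ × ℝ)) ↔
      IsClosed (AddSubgroup.closure {a, b} : Set ℝ) := by
  constructor
  · intro h
    have hc : Continuous fun z : ℝ => ((0, 0, z) : ℝ × ℝ × ℝ) := by fun_prop
    convert h.preimage hc using 1
    ext z
    simp only [Set.mem_preimage, SetLike.mem_coe, mem_plane_plus_lattice_iff]
    simp
  · intro h
    have hc : Continuous fun p : ℝ × ℝ × ℝ => p.2.2 - a * p.1 - b * p.2.1 := by fun_prop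
    convert h.preimage hc using 1
    ext p
    exact mem_plane_plus_lattice_iff a b p

lemma isClosed_closure_pair_iff (a b : ℝ) :
    IsClosed (AddSubgroup.closure {a, b} : Set ℝ) ↔ ¬ Irrational (a / b) := by
  rw [← dense_addSubgroupClosure_pair_iff]
  constructor
  · intro hc hd
    have huniv : (AddSubgroup.closure {a, b} : Set ℝ) = Set.univ := by
      rw [← hc.closure_eq, hd.closure_eq]
    have hcount : (AddSubgroup.closure {a, b} : Set ℝ).Countable := by
      refine (Set.countable_range fun k : ℤ × ℤ => k.1 • a + k.2 • b).mono ?_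
      intro x hx
      obtain ⟨m, n, h⟩ := AddSubgroup.mem_closure_pair.1 hx
      exact ⟨(m, n), h⟩
    exact Cardinal.not_countable_real (huniv ▸ hcount)
  · intro hd
    obtain ⟨c, hc⟩ := (AddSubgroup.dense_or_cyclic _).resolve_left hd
    rw [hc, ← AddSubgroup.zmultiples_eq_closure]
    exact AddSubgroup.isClosed_of_discrete

lemma not_irrational_div_iff (a b : ℝ) :
    ¬ Irrational (a / b) ↔
      ∃ q₁ q₂ : ℚ, (q₁ ≠ 0 ∨ q₂ ≠ 0) ∧ (q₁ : ℝ) * a + (q₂ : ℝ) * b = 0 := by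
  rw [Irrational, not_not]
  constructor
  · rintro ⟨q, hq⟩
    rcases eq_or_ne b 0 with rfl | hb
    · exact ⟨0, 1, by simp, by simp⟩
    · refine ⟨1, -q, by simp, ?_⟩
      rw [eq_div_iff hb] at hq
      push_cast
      linear_combination -hq
  · rintro ⟨q₁, q₂, h, e⟩
    rcases eq_or_ne b 0 with rfl | hb
    · exact ⟨0, by simp⟩
    · have h1 : q₁ ≠ 0 := by
        rintro rfl
        simp_all
      have h1' : (q₁ : ℝ) ≠ 0 := by exact_mod_cast h1
      refine ⟨-q₂ / q₁, ?_⟩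
      push_cast
      rw [div_eq_div_iff h1' hb]
      linear_combination -e


/-- the additive subgroup of `ℝ³` generated by the plane
`V = {(x, y, a·x + b·y)}` together with `ℤ² × {0}` is closed if and only if `a` and `b`
are linearly dependent over `ℚ`. -/
theorem plane_plus_lattice_closed_iff (a b : ℝ) :
    IsClosed ((AddSubgroup.closure
        ({p : ℝ × ℝ × ℝ | ∃ x y : ℝ, p = (x, y, a * x + b * y)} ∪
          {p : ℝ × ℝ × ℝ | ∃ m n : ℤ, p = ((m : ℝ), (n : ℝ), 0)})) : Set (ℝ × ℝ × ℝ)) ↔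
      ∃ q₁ q₂ : ℚ, (q₁ ≠ 0 ∨ q₂ ≠ 0) ∧ (q₁ : ℝ) * a + (q₂ : ℝ) * b = 0 := by
  rw [isClosed_plane_plus_lattice_iff, isClosed_closure_pair_iff, not_irrational_div_iff]
end
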